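/- arXiv:1802.04052 — 2 statements merged into one kernel-verified Lean document; each statement's English description precedes it below -/
import Mathlib

section
/- Let λ ∈ ℂ and t ≥ 0. If N(c_λ(t)·I − S(t)) ⊆_e R^∞(c_λ(t)·I − S(t)), then N(λ − A) ⊆_e R^∞(λ − A). -/
/-!
Write `T = c_λ(t) − S(t)` and `f = λ − A`. Everything rests on the two identities
`f (D_λ(t) x) = T x` for all `x : X`, and `D_λ(t) (f x) = T x` for `x ∈ D`.

`A` is closed because it has a resolvent, so it may be moved under an integral
(`closed_integral`). Applied to `r ↦ e^{λ(t−r)} S(r) x` with `x ∈ D` this gives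
`A D_λ(t) x = D_λ(t) A x`, and hence the second identity from the first. For the first
(`Dop_resolvent_identity`), integration by parts turns `D_λ(t) x` into
`V(t) + λ ∫₀ᵗ e^{λ(t−r)} V(r) dr` with `V(r) = ∫₀ʳ S(s) x ds`; here `A V(r)` is known, and the
scalar remainder is `c_λ(t)` after a second integration by parts.

The second identity gives `N(f) ⊆ N(T)`. As `T` commutes with `f` on `D`, it preserves each
`D(Aⁿ)`, so by the first identity `D_λ(t)` maps `D(Aⁿ)` into `D(Aⁿ⁺¹)`, and induction yields
`R(Tⁿ) ⊆ R(fⁿ)`. The finite-dimensional subspace given for `T` therefore also works for `f`.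
-/

open MeasureTheory intervalIntegral Pointwise

noncomputable section

/-- `D_λ(t) x = ∫₀ᵗ e^{λ(t−r)} S(r) x dr`. -/
noncomputable def Dop {X : Type*} [NormedAddCommGroup X] [NormedSpace ℂ X]
    (S : ℝ → X →L[ℂ] X) (l : ℂ) (t : ℝ) (x : X) : X :=
  ∫ r in (0:ℝ)..t, Complex.exp (l * ((t - r : ℝ) : ℂ)) • S r x

/-- `c_λ(t) = ∫₀ᵗ e^{λ(t−s)} s^{α−1}/Γ(α) ds`. -/
noncomputable def cConst (α : ℝ) (l : ℂ) (t : ℝ) : ℂ :=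
  ∫ s in (0:ℝ)..t,
    Complex.exp (l * ((t - s : ℝ) : ℂ)) * ((s ^ (α - 1) : ℝ) : ℂ) / ((Real.Gamma α : ℝ) : ℂ)

/-- `L_λ(t) x = ∫₀ᵗ e^{−λs} D_λ(s) x ds`. -/
noncomputable def Lop {X : Type*} [NormedAddCommGroup X] [NormedSpace ℂ X]
    (S : ℝ → X →L[ℂ] X) (l : ℂ) (t : ℝ) (x : X) : X :=
  ∫ s in (0:ℝ)..t, Complex.exp (-l * ((s : ℝ) : ℂ)) • Dop S l s x

/-- `φ_λ(t) = ∫₀ᵗ ∫₀^τ e^{−λr} r^{α−1}/Γ(α) dr dτ`. -/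
noncomputable def phiConst (α : ℝ) (l : ℂ) (t : ℝ) : ℂ :=
  ∫ τ in (0:ℝ)..t, ∫ r in (0:ℝ)..τ,
    Complex.exp (-l * ((r : ℝ) : ℂ)) * ((r ^ (α - 1) : ℝ) : ℂ) / ((Real.Gamma α : ℝ) : ℂ)

/-- Iterated domain `D(A^n)` of the (possibly unbounded) operator given by the map `f = λ − A`
with domain `D`: `D^0 = X`, `D^{n+1} = {x ∈ D | f x ∈ D^n}`. -/
def iterDom {X : Type*} (D : Set X) (f : X → X) : ℕ → Set X
  | 0 => Set.univ
  | n + 1 => {x | x ∈ D ∧ f x ∈ iterDom D f n}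

/-- The bounded operator `c_λ(t)·I − S(t)`. -/
noncomputable def cSop {X : Type*} [NormedAddCommGroup X] [NormedSpace ℂ X]
    (S : ℝ → X →L[ℂ] X) (α : ℝ) (l : ℂ) (t : ℝ) : X →L[ℂ] X :=
  cConst α l t • ContinuousLinearMap.id ℂ X - S t

/-- `D_{λ,n}(t) = Σ_{i=1}^n binom(n,i)·(φ_λ(t))^{n−i}·e^{−iλt}·(−D_λ(t))^{i−1}`. -/
noncomputable def Dln {X : Type*} [NormedAddCommGroup X] [NormedSpace ℂ X]
    (S : ℝ → X →L[ℂ] X) (α : ℝ) (l : ℂ) (t : ℝ) (n : ℕ) (x : X) : X :=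
  ∑ i ∈ Finset.Icc 1 n,
    ((n.choose i : ℂ) * (phiConst α l t) ^ (n - i) * Complex.exp (-(i : ℂ) * l * (t : ℂ))) •
      ((fun y => - Dop S l t y)^[i - 1] x)

/-- Integration by parts against `e^{λ(t−r)}`; the derivative of `v` may be singular at the
endpoints, as for `v r = r ^ α` with `α < 1`. -/
lemma exp_integral_by_parts {E : Type*} [NormedAddCommGroup E] [NormedSpace ℂ E] [CompleteSpace E]
    (l : ℂ) {t : ℝ} (ht : 0 ≤ t) {v v' : ℝ → E} (hv : ContinuousOn v (Set.Icc 0 t))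
    (hvv' : ∀ r ∈ Set.Ioo 0 t, HasDerivAt v (v' r) r)
    (hv' : IntervalIntegrable v' volume 0 t) (h0 : v 0 = 0) :
    ∫ r in (0:ℝ)..t, Complex.exp (l * ((t - r : ℝ) : ℂ)) • v' r =
      v t + l • ∫ r in (0:ℝ)..t, Complex.exp (l * ((t - r : ℝ) : ℂ)) • v r := by
  have hexp : ∀ r : ℝ, HasDerivAt (fun r : ℝ => Complex.exp (l * ((t - r : ℝ) : ℂ)))
      (-(l * Complex.exp (l * ((t - r : ℝ) : ℂ)))) r := by
    intro r
    have h1 : HasDerivAt (fun r : ℝ => ((t - r : ℝ) : ℂ)) (-1) r := by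
      have := (((hasDerivAt_id r).const_sub t).ofReal_comp)
      simpa using this
    have h2 := (h1.const_mul l).cexp
    convert h2 using 1
    ring
  have key := integral_smul_deriv_eq_deriv_smul_of_hasDerivAt
    (u := fun r : ℝ => Complex.exp (l * ((t - r : ℝ) : ℂ)))
    (u' := fun r : ℝ => -(l * Complex.exp (l * ((t - r : ℝ) : ℂ))))
    (v := v) (v' := v') (a := 0) (b := t)
    (fun r _ => (hexp r).continuousAt.continuousWithinAt)
    (by rwa [Set.uIcc_of_le ht]) (fun r _ => hexp r)
    (by rwa [min_eq_left ht, max_eq_right ht])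
    ((by fun_prop : Continuous fun r : ℝ =>
      -(l * Complex.exp (l * ((t - r : ℝ) : ℂ)))).intervalIntegrable _ _) hv'
  rw [key, h0, ← intervalIntegral.integral_smul]
  simp [mul_smul]

/-- `c_λ(t) = t^α/Γ(α+1) + λ ∫₀ᵗ e^{λ(t−r)} r^α/Γ(α+1) dr`. -/
lemma cConst_eq (α : ℝ) (hα : 0 < α) (l : ℂ) {t : ℝ} (ht : 0 ≤ t) :
    cConst α l t = ((t ^ α : ℝ) : ℂ) / ((Real.Gamma (α + 1) : ℝ) : ℂ) +
      l * ∫ r in (0:ℝ)..t, Complex.exp (l * ((t - r : ℝ) : ℂ)) *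
        (((r ^ α : ℝ) : ℂ) / ((Real.Gamma (α + 1) : ℝ) : ℂ)) := by
  have h := exp_integral_by_parts l ht
    (v := fun r : ℝ => ((r ^ α : ℝ) : ℂ) / ((Real.Gamma (α + 1) : ℝ) : ℂ))
    (v' := fun r : ℝ => ((r ^ (α - 1) : ℝ) : ℂ) / ((Real.Gamma α : ℝ) : ℂ))
    ?_ ?_ ?_ ?_
  · simp only [smul_eq_mul] at h
    rw [← h, cConst]
    simp only [mul_div_assoc]
  · have : Continuous fun r : ℝ => r ^ α := Real.continuous_rpow_const hα.le
    exact (by fun_prop : Continuous fun r : ℝ =>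
      ((r ^ α : ℝ) : ℂ) / ((Real.Gamma (α + 1) : ℝ) : ℂ)).continuousOn
  · intro r hr
    have h1 := ((Real.hasDerivAt_rpow_const (p := α) (Or.inl hr.1.ne')).ofReal_comp).div_const
      ((Real.Gamma (α + 1) : ℝ) : ℂ)
    have hα' : (α : ℂ) ≠ 0 := by exact_mod_cast hα.ne'
    have h2 : ((α * r ^ (α - 1) : ℝ) : ℂ) / ((Real.Gamma (α + 1) : ℝ) : ℂ) =
        ((r ^ (α - 1) : ℝ) : ℂ) / ((Real.Gamma α : ℝ) : ℂ) := by
      rw [Real.Gamma_add_one hα.ne', Complex.ofReal_mul, Complex.ofReal_mul,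
        mul_div_mul_left _ _ hα']
    rwa [h2] at h1
  · have h1 : IntervalIntegrable (fun r : ℝ => r ^ (α - 1)) volume 0 t :=
      intervalIntegrable_rpow' (by linarith)
    have h2 : IntervalIntegrable (fun r : ℝ => ((r ^ (α - 1) : ℝ) : ℂ)) volume 0 t :=
      ⟨Integrable.ofReal h1.1, Integrable.ofReal h1.2⟩
    exact h2.div_const _
  · simp [Real.zero_rpow hα.ne']

section

variable {X : Type*} [NormedAddCommGroup X] [NormedSpace ℂ X] [CompleteSpace X]

/-- An operator with a bounded resolvent is closed, so it commutes with integration. -/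
lemma closed_integral (D : Submodule ℂ X) (A : X →ₗ[ℂ] X)
    (hres : ∃ μ : ℂ, ∃ R : X →L[ℂ] X, (∀ x : X, R x ∈ D) ∧
      (∀ x : X, μ • R x - A (R x) = x) ∧ (∀ x ∈ D, R (μ • x - A x) = x))
    {t : ℝ} (ht : 0 ≤ t) {g h : ℝ → X} (hg : IntervalIntegrable g volume 0 t)
    (hh : IntervalIntegrable h volume 0 t)
    (hgD : ∀ r ∈ Set.Icc 0 t, g r ∈ D ∧ A (g r) = h r) :
    (∫ r in (0:ℝ)..t, g r) ∈ D ∧ A (∫ r in (0:ℝ)..t, g r) = ∫ r in (0:ℝ)..t, h r := by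
  obtain ⟨μ, R, hRD, hR1, hR2⟩ := hres
  have hμg : IntervalIntegrable (fun r => μ • g r) volume 0 t := hg.smul μ
  have key : (∫ r in (0:ℝ)..t, g r) =
      R (μ • (∫ r in (0:ℝ)..t, g r) - ∫ r in (0:ℝ)..t, h r) := by
    rw [← intervalIntegral.integral_smul, ← integral_sub hμg hh,
      ← R.intervalIntegral_comp_comm (hμg.sub hh)]
    refine integral_congr fun r hr => ?_
    rw [Set.uIcc_of_le ht] at hr
    obtain ⟨h1, h2⟩ := hgD r hr
    simp only [← h2]
    exact (hR2 _ h1).symm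
  refine ⟨key ▸ hRD _, ?_⟩
  have h1 := hR1 (μ • (∫ r in (0:ℝ)..t, g r) - ∫ r in (0:ℝ)..t, h r)
  rw [← key] at h1
  exact sub_right_injective h1

/-- `D_λ(t)` maps `X` into `D` and `(λ − A) D_λ(t) = c_λ(t) − S(t)`. -/
lemma Dop_resolvent_identity (α : ℝ) (hα : 0 < α)
    (D : Submodule ℂ X) (A : X →ₗ[ℂ] X) (S : ℝ → X →L[ℂ] X)
    (hcont : ∀ x : X, ContinuousOn (fun u : ℝ => S u x) (Set.Ici (0:ℝ)))
    (hres : ∃ μ : ℂ, ∃ R : X →L[ℂ] X, (∀ x : X, R x ∈ D) ∧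
      (∀ x : X, μ • R x - A (R x) = x) ∧ (∀ x ∈ D, R (μ • x - A x) = x))
    (hint : ∀ u : ℝ, 0 ≤ u → ∀ x : X, (∫ s in (0:ℝ)..u, S s x) ∈ D ∧
      A (∫ s in (0:ℝ)..u, S s x) =
        S u x - (((u ^ α : ℝ) : ℂ) / ((Real.Gamma (α + 1) : ℝ) : ℂ)) • x)
    (l : ℂ) {t : ℝ} (ht : 0 ≤ t) (x : X) :
    Dop S l t x ∈ D ∧ l • Dop S l t x - A (Dop S l t x) = cSop S α l t x := by
  have hS : ContinuousOn (fun u : ℝ => S u x) (Set.Icc 0 t) :=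
    (hcont x).mono Set.Icc_subset_Ici_self
  have hSint : IntervalIntegrable (fun u : ℝ => S u x) volume 0 t :=
    ContinuousOn.intervalIntegrable_of_Icc ht hS
  set V : ℝ → X := fun u => ∫ s in (0:ℝ)..u, S s x with hV
  have hVc : ContinuousOn V (Set.Icc 0 t) := by
    have := continuousOn_primitive_interval' hSint (Set.left_mem_uIcc)
    rwa [Set.uIcc_of_le ht] at this
  have hVd : ∀ r ∈ Set.Ioo 0 t, HasDerivAt V (S r x) r := by
    intro r hr
    refine integral_hasDerivAt_right
      (hSint.mono_set (Set.uIcc_subset_uIcc_left ?_)) ?_ ?_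
    · rw [Set.uIcc_of_le ht]; exact ⟨hr.1.le, hr.2.le⟩
    · exact (hS.mono Set.Ioo_subset_Icc_self).stronglyMeasurableAtFilter isOpen_Ioo r hr
    · exact hS.continuousAt (Icc_mem_nhds hr.1 hr.2)
  have hexpc : Continuous fun r : ℝ => Complex.exp (l * ((t - r : ℝ) : ℂ)) := by fun_prop
  have hpow : Continuous fun r : ℝ =>
      ((r ^ α : ℝ) : ℂ) / ((Real.Gamma (α + 1) : ℝ) : ℂ) := by
    have : Continuous fun r : ℝ => r ^ α := Real.continuous_rpow_const hα.le
    fun_prop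
  have hparts : Dop S l t x =
      V t + l • ∫ r in (0:ℝ)..t, Complex.exp (l * ((t - r : ℝ) : ℂ)) • V r :=
    exp_integral_by_parts l ht hVc hVd hSint (by simp [hV])
  have hi1 : IntervalIntegrable
      (fun r : ℝ => Complex.exp (l * ((t - r : ℝ) : ℂ)) • S r x) volume 0 t :=
    ContinuousOn.intervalIntegrable_of_Icc ht (hexpc.continuousOn.smul hS)
  have hi2 : IntervalIntegrable
      (fun r : ℝ => (Complex.exp (l * ((t - r : ℝ) : ℂ)) *
        (((r ^ α : ℝ) : ℂ) / ((Real.Gamma (α + 1) : ℝ) : ℂ))) • x) volume 0 t :=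
    ((hexpc.mul hpow).smul continuous_const).intervalIntegrable _ _
  obtain ⟨hD, hA⟩ := closed_integral D A hres ht
    (g := fun r => Complex.exp (l * ((t - r : ℝ) : ℂ)) • V r)
    (ContinuousOn.intervalIntegrable_of_Icc ht (hexpc.continuousOn.smul hVc))
    (hi1.sub hi2) (by
      intro r hr
      obtain ⟨h1, h2⟩ := hint r hr.1 x
      refine ⟨D.smul_mem _ h1, ?_⟩
      rw [map_smul, h2, smul_sub, mul_smul])
  rw [integral_sub hi1 hi2, intervalIntegral.integral_smul_const] at hA
  obtain ⟨hVD, hVA⟩ := hint t ht x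
  refine ⟨hparts ▸ D.add_mem hVD (D.smul_mem _ hD), ?_⟩
  have hADop : A (Dop S l t x) = S t x - cConst α l t • x + l • Dop S l t x := by
    conv_lhs => rw [hparts]
    rw [map_add, map_smul, hA, hVA, cConst_eq α hα l ht, Dop]
    module
  rw [hADop]
  simp [cSop]

/-- `D_λ(t)` commutes with `A` on `D`. -/
lemma Dop_comm (D : Submodule ℂ X) (A : X →ₗ[ℂ] X) (S : ℝ → X →L[ℂ] X)
    (hcont : ∀ x : X, ContinuousOn (fun u : ℝ => S u x) (Set.Ici (0:ℝ)))
    (hres : ∃ μ : ℂ, ∃ R : X →L[ℂ] X, (∀ x : X, R x ∈ D) ∧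
      (∀ x : X, μ • R x - A (R x) = x) ∧ (∀ x ∈ D, R (μ • x - A x) = x))
    (hSA : ∀ u : ℝ, 0 ≤ u → ∀ x ∈ D, S u x ∈ D ∧ A (S u x) = S u (A x))
    (l : ℂ) {t : ℝ} (ht : 0 ≤ t) {x : X} (hx : x ∈ D) :
    A (Dop S l t x) = Dop S l t (A x) := by
  have hi : ∀ y : X, IntervalIntegrable
      (fun r : ℝ => Complex.exp (l * ((t - r : ℝ) : ℂ)) • S r y) volume 0 t := fun y =>
    ContinuousOn.intervalIntegrable_of_Icc ht
      ((by fun_prop : Continuous fun r : ℝ =>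
        Complex.exp (l * ((t - r : ℝ) : ℂ))).continuousOn.smul
        ((hcont y).mono Set.Icc_subset_Ici_self))
  refine (closed_integral D A hres ht (hi x) (hi (A x)) fun r hr => ?_).2
  obtain ⟨h1, h2⟩ := hSA r hr.1 x hx
  exact ⟨D.smul_mem _ h1, by rw [map_smul, h2]⟩

end

/-- A map `T` that preserves `D` and commutes with `f` on `D` preserves `D(fⁿ)` and commutes
with `fⁿ` there. -/
lemma iterDom_comm {Y : Type*} (D : Set Y) (f T : Y → Y) (hT : ∀ w ∈ D, T w ∈ D ∧ f (T w) = T (f w))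
    (n : ℕ) : ∀ w ∈ iterDom D f n, T w ∈ iterDom D f n ∧ f^[n] (T w) = T (f^[n] w) := by
  induction n with
  | zero => exact fun w _ => ⟨trivial, rfl⟩
  | succ n ih =>
    rintro w ⟨hw, hfw⟩
    obtain ⟨h1, h2⟩ := hT w hw
    obtain ⟨h3, h4⟩ := ih _ hfw
    refine ⟨⟨h1, h2 ▸ h3⟩, ?_⟩
    rw [Function.iterate_succ_apply, Function.iterate_succ_apply, h2, h4]

/-- If `T` preserves `D`, commutes with `f` on `D`, and factors as `T = f ∘ E` with `E` mapping
into `D`, then `R(Tⁿ) ⊆ R(fⁿ)`: from `Tⁿ x = fⁿ w` one gets `Tⁿ⁺¹ x = fⁿ (T w) = fⁿ⁺¹ (E w)`. -/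
lemma iterate_mem_image {Y : Type*} (D : Set Y) (f T E : Y → Y)
    (hT : ∀ w ∈ D, T w ∈ D ∧ f (T w) = T (f w)) (hE : ∀ w, E w ∈ D ∧ f (E w) = T w)
    (n : ℕ) (x : Y) : T^[n] x ∈ f^[n] '' iterDom D f n := by
  induction n with
  | zero => exact ⟨x, trivial, rfl⟩
  | succ n ih =>
    obtain ⟨w, hw, hwx⟩ := ih
    obtain ⟨h1, h2⟩ := iterDom_comm D f T hT n w hw
    obtain ⟨h3, h4⟩ := hE w
    refine ⟨E w, ⟨h3, h4 ▸ h1⟩, ?_⟩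
    rw [Function.iterate_succ_apply, Function.iterate_succ_apply', h4, h2, hwx]

theorem stmt_9
    {X : Type*} [NormedAddCommGroup X] [NormedSpace ℂ X] [CompleteSpace X]
    (α : ℝ) (hα : 0 < α)
    (D : Submodule ℂ X) (A : X →ₗ[ℂ] X)
    (S : ℝ → X →L[ℂ] X)
    (hcont : ∀ x : X, ContinuousOn (fun u : ℝ => S u x) (Set.Ici (0:ℝ)))
    (hcomm : ∀ u v : ℝ, 0 ≤ u → 0 ≤ v → ∀ x : X, S u (S v x) = S v (S u x))
    (hres : ∃ μ : ℂ, ∃ R : X →L[ℂ] X, (∀ x : X, R x ∈ D) ∧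
      (∀ x : X, μ • R x - A (R x) = x) ∧ (∀ x ∈ D, R (μ • x - A x) = x))
    (hdom : ∀ u : ℝ, 0 ≤ u → ∀ x ∈ D, S u x ∈ D ∧ A (S u x) = S u (A x) ∧
      S u x = (((u ^ α : ℝ) : ℂ) / ((Real.Gamma (α + 1) : ℝ) : ℂ)) • x +
        ∫ s in (0:ℝ)..u, S s (A x))
    (hint : ∀ u : ℝ, 0 ≤ u → ∀ x : X, (∫ s in (0:ℝ)..u, S s x) ∈ D ∧
      A (∫ s in (0:ℝ)..u, S s x) =
        S u x - (((u ^ α : ℝ) : ℂ) / ((Real.Gamma (α + 1) : ℝ) : ℂ)) • x)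
    (l : ℂ) (t : ℝ)
    (ht : 0 ≤ t)
    (hker : ∃ F : Submodule ℂ X, FiniteDimensional ℂ F ∧
      ∀ x : X, cSop S α l t x = 0 →
        ∃ y : X, (∀ n : ℕ, 1 ≤ n → y ∈ Set.range ⇑(cSop S α l t ^ n)) ∧
          ∃ z ∈ F, x = y + z) :
    ∃ F : Submodule ℂ X, FiniteDimensional ℂ F ∧
      ∀ x ∈ D, l • x - A x = 0 →
        ∃ y : X, (∀ n : ℕ, 1 ≤ n →
            y ∈ (fun w => l • w - A w)^[n] '' iterDom (D : Set X) (fun w => l • w - A w) n) ∧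
          ∃ z ∈ F, x = y + z := by
  obtain ⟨F, hF, hFker⟩ := hker
  have hid := Dop_resolvent_identity α hα D A S hcont hres hint l ht
  have hcomm_cS : ∀ w ∈ (D : Set X), cSop S α l t w ∈ (D : Set X) ∧
      l • cSop S α l t w - A (cSop S α l t w) = cSop S α l t (l • w - A w) := by
    intro w hw
    obtain ⟨h1, h2, -⟩ := hdom t ht w hw
    refine ⟨D.sub_mem (D.smul_mem _ hw) h1, ?_⟩
    simp only [cSop, sub_apply, smul_apply,
      ContinuousLinearMap.id_apply, map_sub, map_smul, h2]
  refine ⟨F, hF, fun x hx hlx => ?_⟩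
  have hTx : cSop S α l t x = 0 := by
    have hc := Dop_comm D A S hcont hres
      (fun u hu y hy => ⟨(hdom u hu y hy).1, (hdom u hu y hy).2.1⟩) l ht hx
    have hAx : A x = l • x := (sub_eq_zero.mp hlx).symm
    have hsm : Dop S l t (l • x) = l • Dop S l t x := by
      simp only [Dop, map_smul]
      rw [← intervalIntegral.integral_smul]
      exact integral_congr fun r _ => smul_comm _ _ _
    rw [← (hid x).2, hc, hAx, hsm, sub_self]
  obtain ⟨y, hy, z, hz, hxyz⟩ := hFker x hTx
  refine ⟨y, fun n hn => ?_, z, hz, hxyz⟩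
  obtain ⟨w, rfl⟩ := hy n hn
  rw [FunLike.coe_pow_eq_iterate]
  exact iterate_mem_image _ _ _ (Dop S l t) hcomm_cS hid n w
end
end

section
/- (Essentially Kato spectrum inclusion) Let λ ∈ ℂ and t > 0 with φ_λ(t) ≠ 0. If the bounded operator c_λ(t)·I − S(t) is essentially Kato, i.e. its range is closed and N(c_λ(t)·I − S(t)) ⊆_e R^∞(c_λ(t)·I − S(t)), then λ − A is essentially Kato: the range of λ − A is closed in X and N(λ − A) ⊆_e R^∞(λ − A). -/
/-!
Write `B = λ − A` and `W(s)x = ∫₀ˢ e^{−λr} S(r)x dr = e^{−λs} D_λ(s)x`,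
`k(s) = ∫₀ˢ e^{−λr} r^{α−1}/Γ(α) dr = e^{−λs} c_λ(s)`, so that `φ_λ(t) = ∫₀ᵗ k`.
Integrating by parts and using `A ∫₀ˢ S(r)x dr = S(s)x − s^α/Γ(α+1) x` gives
`B W(s)x = k(s)x − e^{−λs} S(s)x` (`bW_eq`), hence `T := c_λ(t) − S(t) = e^{λt} B W(t)`, and also
`T x = e^{λt} W(t) B x` on `D(A)` because `W(t)` commutes with `A` (`bW_comm`).
A further integration gives `B ∫₀ᵗ W(s)x ds = φ_λ(t)x − W(t)x` (`bL_eq`).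

*Closed range.* If `B xₙ → y`, then `T xₙ = e^{λt} W(t) B xₙ → e^{λt} W(t)y`, which therefore lies in
`R(T) ⊆ R(B)`; since `φ_λ(t) y − W(t)y ∈ R(B)` and `φ_λ(t) ≠ 0`, also `y ∈ R(B)`.

*Kernel.* `N(B) ⊆ N(T)`, and `T^n = B^n (e^{λt} W(t))^n` gives `R(T^n) ⊆ R(B^n)`, so the same
finite-dimensional subspace works for `B`.
-/

open MeasureTheory intervalIntegral Pointwise

noncomputable section

/-! ### Weighted integrals and integration by parts -/

/-- The weighted integral `W(s)x = ∫₀ˢ e^{−λr} S(r)x dr`, equal to `e^{−λs} D_λ(s)x`. -/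
def Wint {X : Type*} [NormedAddCommGroup X] [NormedSpace ℂ X]
    (S : ℝ → X →L[ℂ] X) (l : ℂ) (s : ℝ) (x : X) : X :=
  ∫ r in (0:ℝ)..s, Complex.exp (-l * (r : ℂ)) • S r x

/-- The scalar `k(s) = ∫₀ˢ e^{−λr} r^{α−1}/Γ(α) dr`, equal to `e^{−λs} c_λ(s)`. -/
def kint (α : ℝ) (l : ℂ) (s : ℝ) : ℂ :=
  ∫ r in (0:ℝ)..s,
    Complex.exp (-l * ((r : ℝ) : ℂ)) * ((r ^ (α - 1) : ℝ) : ℂ) / ((Real.Gamma α : ℝ) : ℂ)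

lemma continuous_expl (l : ℂ) : Continuous (fun r : ℝ => Complex.exp (-l * (r : ℂ))) := by
  fun_prop

/-- Integration by parts against `e^{−λr}`, for `f` differentiable in the interior only, so that it
covers `f(r) = r^α` with `0 < α < 1`. -/
lemma exp_parts {E : Type*} [NormedAddCommGroup E] [NormedSpace ℂ E] [CompleteSpace E]
    (l : ℂ) {s : ℝ} (hs : 0 ≤ s) {f f' : ℝ → E} (hf : ContinuousOn f (Set.Icc 0 s))
    (hd : ∀ r ∈ Set.Ioo 0 s, HasDerivAt f (f' r) r) (hi : IntervalIntegrable f' volume 0 s)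
    (h0 : f 0 = 0) :
    ∫ r in (0:ℝ)..s, Complex.exp (-l * (r : ℂ)) • f' r =
      Complex.exp (-l * (s : ℂ)) • f s +
        ∫ r in (0:ℝ)..s, l • (Complex.exp (-l * (r : ℂ)) • f r) := by
  have hi1 : IntervalIntegrable (fun r : ℝ => Complex.exp (-l * (r : ℂ)) • f' r) volume 0 s :=
    hi.continuousOn_smul (continuous_expl l).continuousOn
  have hi2 : IntervalIntegrable (fun r : ℝ => l • (Complex.exp (-l * (r : ℂ)) • f r))
      volume 0 s := by
    apply ContinuousOn.intervalIntegrable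
    rw [Set.uIcc_of_le hs]
    exact ((continuous_expl l).continuousOn.smul hf).const_smul l
  have key := integral_eq_sub_of_hasDerivAt_of_le hs
    (f := fun r : ℝ => Complex.exp (-l * (r : ℂ)) • f r)
    (f' := fun r : ℝ => Complex.exp (-l * (r : ℂ)) • f' r -
      l • (Complex.exp (-l * (r : ℂ)) • f r))
    ((continuous_expl l).continuousOn.smul hf) (by
      intro r hr
      have he : HasDerivAt (fun r : ℝ => Complex.exp (-l * (r : ℂ)))
          (Complex.exp (-l * (r : ℂ)) * (-l * 1)) r := by
        have := (Complex.ofRealCLM.hasDerivAt (x := r)).const_mul (-l)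
        simpa using this.cexp
      refine (he.smul (hd r hr)).congr_deriv ?_
      symm
      rw [smul_smul, sub_eq_add_neg, ← neg_smul]
      congr 2
      ring) (hi1.sub hi2)
  rw [integral_sub hi1 hi2] at key
  simp only [h0, smul_zero, sub_zero] at key
  rw [← key]
  abel

lemma integrable_pow_div {α : ℝ} (hα : 0 < α) (a b : ℝ) :
    IntervalIntegrable (fun r : ℝ => ((r ^ (α - 1) : ℝ) : ℂ) / ((Real.Gamma α : ℝ) : ℂ))
      volume a b := by
  have h : IntervalIntegrable (fun r : ℝ => r ^ (α - 1)) volume a b :=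
    intervalIntegrable_rpow' (by linarith)
  exact (IntervalIntegrable.div_const (𝕜 := ℂ) ⟨h.1.ofReal, h.2.ofReal⟩ _)

lemma continuous_kint {α : ℝ} (hα : 0 < α) (l : ℂ) : Continuous (kint α l) := by
  apply intervalIntegral.continuous_primitive
  intro a b
  have := (integrable_pow_div hα a b).continuousOn_mul (continuous_expl l).continuousOn
  simpa only [mul_div_assoc] using this

lemma kint_parts {α : ℝ} (hα : 0 < α) (l : ℂ) {s : ℝ} (hs : 0 ≤ s) :
    kint α l s = Complex.exp (-l * (s : ℂ)) *
        (((s ^ α : ℝ) : ℂ) / ((Real.Gamma (α + 1) : ℝ) : ℂ)) +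
      ∫ r in (0:ℝ)..s, l * (Complex.exp (-l * (r : ℂ)) *
        (((r ^ α : ℝ) : ℂ) / ((Real.Gamma (α + 1) : ℝ) : ℂ))) := by
  have := exp_parts l hs (f := fun r : ℝ => ((r ^ α : ℝ) : ℂ) / ((Real.Gamma (α + 1) : ℝ) : ℂ))
    (f' := fun r : ℝ => ((r ^ (α - 1) : ℝ) : ℂ) / ((Real.Gamma α : ℝ) : ℂ))
    (by
      apply Continuous.continuousOn
      have : Continuous (fun r : ℝ => r ^ α) := Real.continuous_rpow_const hα.le
      fun_prop)
    (by
      intro r hr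
      have h1 := ((Real.hasDerivAt_rpow_const (x := r) (p := α)
        (Or.inl hr.1.ne')).ofReal_comp).div_const ((Real.Gamma (α + 1) : ℝ) : ℂ)
      refine h1.congr_deriv ?_
      rw [Real.Gamma_add_one hα.ne']
      have h2 : ((Real.Gamma α : ℝ) : ℂ) ≠ 0 := by
        exact_mod_cast (Real.Gamma_pos_of_pos hα).ne'
      have h3 : (α : ℂ) ≠ 0 := by exact_mod_cast hα.ne'
      push_cast
      field_simp)
    (integrable_pow_div hα 0 s) (by simp [Real.zero_rpow hα.ne'])
  simpa only [kint, smul_eq_mul, mul_div_assoc] using this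

lemma cConst_eq_s12 (α : ℝ) (l : ℂ) (t : ℝ) :
    cConst α l t = Complex.exp (l * (t : ℂ)) * kint α l t := by
  unfold cConst kint
  rw [← intervalIntegral.integral_const_mul]
  congr 1
  ext s
  have : Complex.exp (l * ((t - s : ℝ) : ℂ)) =
      Complex.exp (l * (t : ℂ)) * Complex.exp (-l * (s : ℂ)) := by
    rw [← Complex.exp_add]
    congr 1
    push_cast
    ring
  rw [this]
  ring

lemma continuous_Wint {X : Type*} [NormedAddCommGroup X] [NormedSpace ℂ X]
    {S : ℝ → X →L[ℂ] X} (hcont : ∀ x : X, Continuous (fun u : ℝ => S u x)) (l : ℂ) (x : X) : Continuous (fun s => Wint S l s x) := by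
  apply intervalIntegral.continuous_primitive
  intro a b
  exact ((continuous_expl l).smul (hcont x)).intervalIntegrable a b

/-! ### The generator and the weighted integrals of the semigroup -/

section Resolvent

variable {X : Type*} [NormedAddCommGroup X] [NormedSpace ℂ X] [CompleteSpace X]

/-- An operator with a bounded resolvent is closed, in the form needed here: it may be moved under
an integral sign. -/
lemma A_integral {D : Submodule ℂ X} {A : X →ₗ[ℂ] X} {μ : ℂ} {R : X →L[ℂ] X}
    (hR1 : ∀ x : X, R x ∈ D) (hR2 : ∀ x : X, μ • R x - A (R x) = x)
    (hR3 : ∀ x ∈ D, R (μ • x - A x) = x) {a b : ℝ} {g h : ℝ → X}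
    (hg : IntervalIntegrable g volume a b) (hh : IntervalIntegrable h volume a b)
    (H : ∀ s ∈ Set.uIcc a b, g s ∈ D ∧ A (g s) = h s) :
    (∫ s in a..b, g s) ∈ D ∧ A (∫ s in a..b, g s) = ∫ s in a..b, h s := by
  have h1 : (∫ s in a..b, g s) = R (μ • (∫ s in a..b, g s) - ∫ s in a..b, h s) := by
    have hg' : IntervalIntegrable (fun s => μ • g s) volume a b := hg.smul μ
    rw [← intervalIntegral.integral_smul, ← integral_sub hg' hh,
      ← R.intervalIntegral_comp_comm (hg'.sub hh)]
    apply integral_congr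
    intro s hs
    obtain ⟨h2, h3⟩ := H s hs
    simp only [← h3]
    exact (hR3 _ h2).symm
  have h4 := hR2 (μ • (∫ s in a..b, g s) - ∫ s in a..b, h s)
  rw [← h1] at h4
  refine ⟨h1 ▸ hR1 _, ?_⟩
  exact sub_right_injective h4

variable {S : ℝ → X →L[ℂ] X}

/-- `W(t)` as a bounded operator; boundedness comes from the uniform boundedness principle on
`[0,t]`. -/
lemma exists_WCLM (hcont : ∀ x : X, Continuous (fun u : ℝ => S u x)) (l : ℂ) (t : ℝ) :
    ∃ W : X →L[ℂ] X, ∀ x, W x = Wint S l t x := by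
  have hi : ∀ x, IntervalIntegrable (fun r : ℝ => Complex.exp (-l * (r : ℂ)) • S r x)
      volume 0 t := fun x => ((continuous_expl l).smul (hcont x)).intervalIntegrable 0 t
  obtain ⟨C, hC⟩ := banach_steinhaus
    (g := fun r : Set.uIcc (0:ℝ) t => Complex.exp (-l * ((r : ℝ) : ℂ)) • S r) (by
      intro x
      obtain ⟨C, hC⟩ := (isCompact_uIcc (a := (0:ℝ)) (b := t)).exists_bound_of_continuousOn
        ((continuous_expl l).smul (hcont x)).continuousOn
      exact ⟨C, fun r => hC r r.2⟩)
  refine ⟨LinearMap.mkContinuous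
    { toFun := Wint S l t
      map_add' := fun x y => ?_
      map_smul' := fun c x => ?_ } (C * |t - 0|) ?_, fun x => rfl⟩
  · simp only [Wint, map_add, smul_add]
    exact integral_add (hi x) (hi y)
  · simp only [Wint, map_smul, RingHom.id_apply]
    rw [← intervalIntegral.integral_smul]
    congr 1
    ext r
    rw [smul_comm]
  · intro x
    have : ‖Wint S l t x‖ ≤ (C * ‖x‖) * |t - 0| := by
      apply intervalIntegral.norm_integral_le_of_norm_le_const
      intro r hr
      exact ((Complex.exp (-l * (r : ℂ)) • S r).le_of_opNorm_le
        (hC ⟨r, Set.uIoc_subset_uIcc hr⟩) x)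
    exact this.trans (le_of_eq (by ring))

/-- `(λ − A) W(s)x = k(s)x − e^{−λs} S(s)x`. -/
lemma bW_eq (hcont : ∀ x : X, Continuous (fun u : ℝ => S u x)) {α : ℝ} (hα : 0 < α)
    {D : Submodule ℂ X} {A : X →ₗ[ℂ] X} {μ : ℂ} {R : X →L[ℂ] X}
    (hR1 : ∀ x : X, R x ∈ D) (hR2 : ∀ x : X, μ • R x - A (R x) = x)
    (hR3 : ∀ x ∈ D, R (μ • x - A x) = x)
    (hint : ∀ u : ℝ, 0 ≤ u → ∀ x : X, (∫ s in (0:ℝ)..u, S s x) ∈ D ∧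
      A (∫ s in (0:ℝ)..u, S s x) =
        S u x - (((u ^ α : ℝ) : ℂ) / ((Real.Gamma (α + 1) : ℝ) : ℂ)) • x)
    (l : ℂ) {s : ℝ} (hs : 0 ≤ s) (x : X) :
    Wint S l s x ∈ D ∧ A (Wint S l s x) =
      l • Wint S l s x - (kint α l s • x - Complex.exp (-l * (s : ℂ)) • S s x) := by
  have hV : Continuous (fun r : ℝ => ∫ u in (0:ℝ)..r, S u x) :=
    intervalIntegral.continuous_primitive (fun a b => (hcont x).intervalIntegrable a b) 0
  have hga : Continuous
      (fun r : ℝ => ((r ^ α : ℝ) : ℂ) / ((Real.Gamma (α + 1) : ℝ) : ℂ)) := by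
    have : Continuous (fun r : ℝ => r ^ α) := Real.continuous_rpow_const hα.le
    fun_prop
  have hparts : Wint S l s x = _ := exp_parts l hs (f := fun r : ℝ => ∫ u in (0:ℝ)..r, S u x)
    (f' := fun r => S r x) hV.continuousOn
    (fun r _ => integral_hasDerivAt_right ((hcont x).intervalIntegrable 0 r)
      ((hcont x).stronglyMeasurableAtFilter _ _) (hcont x).continuousAt)
    ((hcont x).intervalIntegrable 0 s) integral_same
  have c1 : Continuous (fun r : ℝ => l • (Complex.exp (-l * (r : ℂ)) • S r x)) :=
    ((continuous_expl l).smul (hcont x)).const_smul l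
  have c2 : Continuous (fun r : ℝ => (l * (Complex.exp (-l * (r : ℂ)) *
      (((r ^ α : ℝ) : ℂ) / ((Real.Gamma (α + 1) : ℝ) : ℂ)))) • x) :=
    (continuous_const.mul ((continuous_expl l).mul hga)).smul continuous_const
  obtain ⟨h1, h2⟩ := A_integral hR1 hR2 hR3 (a := 0) (b := s)
    (g := fun r : ℝ => l • (Complex.exp (-l * (r : ℂ)) • ∫ u in (0:ℝ)..r, S u x))
    (h := fun r : ℝ => l • (Complex.exp (-l * (r : ℂ)) • S r x) -
      (l * (Complex.exp (-l * (r : ℂ)) *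
        (((r ^ α : ℝ) : ℂ) / ((Real.Gamma (α + 1) : ℝ) : ℂ)))) • x)
    ((((continuous_expl l).smul hV).const_smul l).intervalIntegrable 0 s)
    ((c1.sub c2).intervalIntegrable 0 s) (by
      intro r hr
      rw [Set.uIcc_of_le hs] at hr
      obtain ⟨h1, h2⟩ := hint r hr.1 x
      refine ⟨D.smul_mem _ (D.smul_mem _ h1), ?_⟩
      simp only [map_smul, h2, smul_sub, smul_smul, mul_assoc])
  obtain ⟨h3, h4⟩ := hint s hs x
  refine ⟨hparts ▸ D.add_mem (D.smul_mem _ h3) h1, ?_⟩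
  conv_lhs => rw [hparts]
  rw [map_add, map_smul, h2, h4, integral_sub (c1.intervalIntegrable 0 s)
    (c2.intervalIntegrable 0 s), intervalIntegral.integral_smul,
    intervalIntegral.integral_smul_const, kint_parts hα l hs]
  change _ = l • (∫ r in (0:ℝ)..s, Complex.exp (-l * (r : ℂ)) • S r x) - _
  module

/-- `A W(t)x = W(t) A x` for `x ∈ D(A)`. -/
lemma bW_comm (hcont : ∀ x : X, Continuous (fun u : ℝ => S u x))
    {D : Submodule ℂ X} {A : X →ₗ[ℂ] X} {μ : ℂ} {R : X →L[ℂ] X}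
    (hR1 : ∀ x : X, R x ∈ D) (hR2 : ∀ x : X, μ • R x - A (R x) = x)
    (hR3 : ∀ x ∈ D, R (μ • x - A x) = x)
    (hdom : ∀ u : ℝ, 0 ≤ u → ∀ x ∈ D, S u x ∈ D ∧ A (S u x) = S u (A x))
    (l : ℂ) {t : ℝ} (ht : 0 ≤ t) {x : X} (hx : x ∈ D) :
    A (Wint S l t x) = Wint S l t (A x) := by
  refine (A_integral hR1 hR2 hR3 (((continuous_expl l).smul (hcont x)).intervalIntegrable 0 t)
    (((continuous_expl l).smul (hcont (A x))).intervalIntegrable 0 t) ?_).2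
  intro r hr
  rw [Set.uIcc_of_le ht] at hr
  obtain ⟨h1, h2⟩ := hdom r hr.1 x hx
  exact ⟨D.smul_mem _ h1, by simp [h2]⟩

/-- `(λ − A) ∫₀ᵗ W(s)x ds = φ_λ(t)x − W(t)x`. -/
lemma bL_eq (hcont : ∀ x : X, Continuous (fun u : ℝ => S u x)) {α : ℝ} (hα : 0 < α)
    {D : Submodule ℂ X} {A : X →ₗ[ℂ] X} {μ : ℂ} {R : X →L[ℂ] X}
    (hR1 : ∀ x : X, R x ∈ D) (hR2 : ∀ x : X, μ • R x - A (R x) = x)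
    (hR3 : ∀ x ∈ D, R (μ • x - A x) = x)
    (hint : ∀ u : ℝ, 0 ≤ u → ∀ x : X, (∫ s in (0:ℝ)..u, S s x) ∈ D ∧
      A (∫ s in (0:ℝ)..u, S s x) =
        S u x - (((u ^ α : ℝ) : ℂ) / ((Real.Gamma (α + 1) : ℝ) : ℂ)) • x)
    (l : ℂ) {t : ℝ} (ht : 0 ≤ t) (x : X) :
    ∃ u ∈ D, l • u - A u = phiConst α l t • x - Wint S l t x := by
  have c1 : Continuous (fun s => l • Wint S l s x) := (continuous_Wint hcont l x).const_smul l
  have c2 : Continuous (fun s => kint α l s • x) :=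
    (continuous_kint hα l).smul continuous_const
  have c3 : Continuous (fun r : ℝ => Complex.exp (-l * (r : ℂ)) • S r x) :=
    (continuous_expl l).smul (hcont x)
  have c23 : Continuous
      (fun r : ℝ => kint α l r • x - Complex.exp (-l * (r : ℂ)) • S r x) := c2.sub c3
  obtain ⟨h1, h2⟩ := A_integral hR1 hR2 hR3 (a := 0) (b := t)
    ((continuous_Wint hcont l x).intervalIntegrable 0 t)
    ((c1.sub c23).intervalIntegrable 0 t) (by
      intro r hr
      rw [Set.uIcc_of_le ht] at hr
      exact bW_eq hcont hα hR1 hR2 hR3 hint l hr.1 x)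
  refine ⟨_, h1, ?_⟩
  rw [h2]
  simp only [Pi.sub_apply]
  rw [integral_sub (c1.intervalIntegrable 0 t) (c23.intervalIntegrable 0 t),
    integral_sub (c2.intervalIntegrable 0 t) (c3.intervalIntegrable 0 t),
    intervalIntegral.integral_smul, intervalIntegral.integral_smul_const, sub_sub_cancel]
  rfl

end Resolvent

/-! ### Ranges of powers and the conclusion -/

/-- If `E` maps into `D` and commutes with `f` on `D`, then `(f ∘ E)^n = f^n ∘ E^n`, with `E^n`
mapping into `D(f^n)`. -/
lemma range_pow_sub {X : Type*} {D : Set X} {f E T : X → X} (hE : ∀ x, E x ∈ D)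
    (hT : ∀ x, f (E x) = T x) (hc : ∀ x ∈ D, f (E x) = E (f x)) (n : ℕ) (x : X) :
    E^[n] x ∈ iterDom D f n ∧ f^[n] (E^[n] x) = T^[n] x := by
  have hdomE : ∀ (n : ℕ) (x : X), x ∈ iterDom D f n → E x ∈ iterDom D f n := by
    intro n
    induction n with
    | zero => intro x _; trivial
    | succ n ih =>
      intro x hx
      exact ⟨hE x, by rw [hc x hx.1]; exact ih _ hx.2⟩
  have hTD : ∀ (n : ℕ) (x : X), x ∈ iterDom D f n → T x ∈ iterDom D f n := by
    intro n
    induction n with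
    | zero => intro x _; trivial
    | succ n ih =>
      intro x hx
      rw [← hT, hc x hx.1]
      refine ⟨hE _, ?_⟩
      rw [hT]
      exact ih _ hx.2
  have hTE : ∀ x, T (E x) = E (T x) := fun x => by rw [← hT, hc _ (hE x), hT]
  have hTEn : ∀ (n : ℕ) (x : X), T (E^[n] x) = E^[n] (T x) := fun n x =>
    Function.Commute.iterate_right (f := T) (g := E) hTE n x
  induction n generalizing x with
  | zero => exact ⟨trivial, rfl⟩
  | succ n ih =>
    have h : f (E^[n + 1] x) = E^[n] (T x) := by
      rw [Function.iterate_succ_apply', hT, hTEn]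
    refine ⟨⟨?_, ?_⟩, ?_⟩
    · rw [Function.iterate_succ_apply']
      exact hE _
    · rw [h]
      exact (ih (T x)).1
    · rw [Function.iterate_succ_apply f, h, (ih (T x)).2, Function.iterate_succ_apply]

theorem stmt_12
    {X : Type*} [NormedAddCommGroup X] [NormedSpace ℂ X] [CompleteSpace X]
    (α : ℝ) (hα : 0 < α)
    (D : Submodule ℂ X) (A : X →ₗ[ℂ] X)
    (S : ℝ → X →L[ℂ] X)
    (hcont : ∀ x : X, ContinuousOn (fun u : ℝ => S u x) (Set.Ici (0:ℝ)))
    (hcomm : ∀ u v : ℝ, 0 ≤ u → 0 ≤ v → ∀ x : X, S u (S v x) = S v (S u x))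
    (hres : ∃ μ : ℂ, ∃ R : X →L[ℂ] X, (∀ x : X, R x ∈ D) ∧
      (∀ x : X, μ • R x - A (R x) = x) ∧ (∀ x ∈ D, R (μ • x - A x) = x))
    (hdom : ∀ u : ℝ, 0 ≤ u → ∀ x ∈ D, S u x ∈ D ∧ A (S u x) = S u (A x) ∧
      S u x = (((u ^ α : ℝ) : ℂ) / ((Real.Gamma (α + 1) : ℝ) : ℂ)) • x +
        ∫ s in (0:ℝ)..u, S s (A x))
    (hint : ∀ u : ℝ, 0 ≤ u → ∀ x : X, (∫ s in (0:ℝ)..u, S s x) ∈ D ∧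
      A (∫ s in (0:ℝ)..u, S s x) =
        S u x - (((u ^ α : ℝ) : ℂ) / ((Real.Gamma (α + 1) : ℝ) : ℂ)) • x)
    (l : ℂ) (t : ℝ)
    (ht : 0 < t) (hphi : phiConst α l t ≠ 0)
    (hcl : IsClosed (Set.range ⇑(cSop S α l t)))
    (hker : ∃ F : Submodule ℂ X, FiniteDimensional ℂ F ∧
      ∀ x : X, cSop S α l t x = 0 →
        ∃ y : X, (∀ n : ℕ, 1 ≤ n → y ∈ Set.range ⇑(cSop S α l t ^ n)) ∧
          ∃ z ∈ F, x = y + z) :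
    IsClosed ((fun y => l • y - A y) '' (D : Set X)) ∧
      ∃ F : Submodule ℂ X, FiniteDimensional ℂ F ∧
        ∀ x ∈ D, l • x - A x = 0 →
          ∃ y : X, (∀ n : ℕ, 1 ≤ n →
              y ∈ (fun w => l • w - A w)^[n] '' iterDom (D : Set X) (fun w => l • w - A w) n) ∧
            ∃ z ∈ F, x = y + z := by
  obtain ⟨μ, R, hR1, hR2, hR3⟩ := hres
  -- Extending `S` constantly to negative times makes its orbits continuous on all of `ℝ`.
  let S' : ℝ → X →L[ℂ] X := fun u => S (max u 0)
  have hS' : ∀ u, 0 ≤ u → S' u = S u := fun u hu => by simp [S', max_eq_left hu]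
  have hcont' : ∀ x : X, Continuous (fun u : ℝ => S' u x) := fun x =>
    (hcont x).comp_continuous (f := fun u : ℝ => max u 0) (by fun_prop)
      (fun u => le_max_right u 0)
  have hdom' : ∀ u : ℝ, 0 ≤ u → ∀ x ∈ D, S' u x ∈ D ∧ A (S' u x) = S' u (A x) := by
    intro u hu x hx
    rw [hS' u hu]
    exact ⟨(hdom u hu x hx).1, (hdom u hu x hx).2.1⟩
  have hint' : ∀ u : ℝ, 0 ≤ u → ∀ x : X, (∫ s in (0:ℝ)..u, S' s x) ∈ D ∧
      A (∫ s in (0:ℝ)..u, S' s x) =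
        S' u x - (((u ^ α : ℝ) : ℂ) / ((Real.Gamma (α + 1) : ℝ) : ℂ)) • x := by
    intro u hu x
    have : (∫ s in (0:ℝ)..u, S' s x) = ∫ s in (0:ℝ)..u, S s x := by
      apply integral_congr
      intro s hs
      rw [Set.uIcc_of_le hu] at hs
      simp only [hS' s hs.1]
    rw [this, hS' u hu]
    exact hint u hu x
  obtain ⟨W, hW⟩ := exists_WCLM hcont' l t
  set T := cSop S α l t with hTdef
  set f : X → X := fun w => l • w - A w with hf
  let e : ℂ := Complex.exp (l * (t : ℂ))
  have he : e * Complex.exp (-l * (t : ℂ)) = 1 := by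
    rw [← Complex.exp_add]
    simp
  -- `E = e^{λt} W(t)` is the operator `D_λ(t)`.
  let E : X →L[ℂ] X := e • W
  have hED : ∀ x, E x ∈ D := fun x => by
    change e • W x ∈ D
    rw [hW]
    refine D.smul_mem _ ?_
    exact (bW_eq hcont' hα hR1 hR2 hR3 hint' l ht.le x).1
  have hBE : ∀ x, f (E x) = T x := by
    intro x
    have h := (bW_eq hcont' hα hR1 hR2 hR3 hint' l ht.le x).2
    simp only [hf, E, T, cSop, smul_apply, hW, map_smul, h, hS' t ht.le,
      sub_apply, ContinuousLinearMap.id_apply, cConst_eq_s12]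
    have : S t x = (e * Complex.exp (-l * (t : ℂ))) • S t x := by rw [he, one_smul]
    conv_rhs => rw [this]
    simp only [e]
    module
  have hEB : ∀ x ∈ D, f (E x) = E (f x) := by
    intro x hx
    have h := bW_comm hcont' hR1 hR2 hR3 hdom' l ht.le hx
    rw [← hW, ← hW] at h
    simp only [hf, E, smul_apply, map_smul, map_sub, h]
  refine ⟨?_, ?_⟩
  · apply isClosed_of_closure_subset
    intro y hy
    obtain ⟨b, hb, hby⟩ := mem_closure_iff_seq_limit.1 hy
    have hEy : E y ∈ Set.range T := by
      refine hcl.mem_of_tendsto ((E.continuous.tendsto y).comp hby)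
        (Filter.Eventually.of_forall fun n => ?_)
      obtain ⟨x, hx, hxb⟩ := hb n
      refine ⟨x, ?_⟩
      rw [← hBE, hEB x hx]
      exact congrArg E hxb
    obtain ⟨z, hz⟩ := hEy
    obtain ⟨u, hu, hu'⟩ := bL_eq hcont' hα hR1 hR2 hR3 hint' l ht.le y
    refine ⟨(phiConst α l t)⁻¹ • (u + Complex.exp (-l * (t : ℂ)) • E z),
      D.smul_mem _ (D.add_mem hu (D.smul_mem _ (hED z))), ?_⟩
    have h1 : l • E z - A (E z) = e • W y := (hBE z).trans hz
    have h2 : W y = (Complex.exp (-l * (t : ℂ)) * e) • W y := by rw [mul_comm, he, one_smul]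
    rw [← hW] at hu'
    have h3 : l • (u + Complex.exp (-l * (t : ℂ)) • E z) -
        A (u + Complex.exp (-l * (t : ℂ)) • E z) = phiConst α l t • y := by
      calc _ = (l • u - A u) + Complex.exp (-l * (t : ℂ)) • (l • E z - A (E z)) := by
            rw [map_add, map_smul]
            module
        _ = _ := by
            rw [hu', h1, smul_smul, ← h2]
            abel
    change l • _ - A _ = y
    rw [map_smul, smul_comm, ← smul_sub, h3, smul_smul, inv_mul_cancel₀ hphi, one_smul]
  · obtain ⟨F, hF, hker⟩ := hker
    refine ⟨F, hF, fun x hx hx0 => ?_⟩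
    obtain ⟨y, hy, z, hz, hxyz⟩ := hker x (by
      rw [← hBE, hEB x hx]
      exact (congrArg E hx0).trans (map_zero E))
    refine ⟨y, fun n hn => ?_, z, hz, hxyz⟩
    obtain ⟨w, hw⟩ := hy n hn
    obtain ⟨h1, h2⟩ := range_pow_sub (D := (D : Set X)) hED hBE hEB n w
    refine ⟨E^[n] w, h1, h2.trans ?_⟩
    rw [← hw, FunLike.coe_pow_eq_iterate]
end
end
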